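/- (Theorem 2: Stability vs. structure regularization.) Under the structure regularization framework, assume each sample-wise loss L_τ(·, z′_j) is convex and differentiable on F, f(x,k) is ρ-admissible, the point-wise cost is τ-smooth, and every feature value is bounded by v (|x_(k,q)| ≤ v for all coordinates q ∈ {1,…,d}, for all inputs considered). Then the function stability Δ of the minimizer f compared with f^{∖i′} is bounded: for every sample z = (x, y) of structure complexity n (with feature values bounded by v) and every position k, |f(x, k) − f^{∖i′}(x, k)| ≤ dτρ²v²n² / (mλα²). -/

import Mathlib

open scoped BigOperators

/-!
A minimizer `x` of a `c`-strongly convex function `J` satisfies `J x + c / 2 * ‖x - y‖ ^ 2 ≤ J y`.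
Writing this for the full risk at `f` and for the risk with one term removed at `f'`, and adding the
two inequalities, leaves `c * ‖f - f'‖ ^ 2` bounded by the change of the removed term alone. That
term is Lipschitz in the function, so one factor `‖f - f'‖` cancels, and admissibility turns the
resulting bound on `‖f - f'‖` into a bound on predictions. The length of the removed mini-sample
enters twice, through the number of its point-wise losses and through the norm of its summed
features; its square is the source of the factor `1 / α ^ 2`.
-/

section StrongConvexity

open Filter Topology

theorem convexOn_finset_sum {𝕜 E β ι : Type*} [Semiring 𝕜] [PartialOrder 𝕜] [AddCommMonoid E]
    [AddCommMonoid β] [PartialOrder β] [IsOrderedAddMonoid β] [SMul 𝕜 E] [Module 𝕜 β] {S : Set E}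
    (hS : Convex 𝕜 S) {s : Finset ι} {L : ι → E → β} (hL : ∀ p ∈ s, ConvexOn 𝕜 S (L p)) :
    ConvexOn 𝕜 S (∑ p ∈ s, L p) :=
  Finset.sum_induction L (ConvexOn 𝕜 S) (fun _ _ ↦ ConvexOn.add)
    ⟨hS, fun _ _ _ _ _ _ _ _ _ ↦ by simp⟩ hL

variable {E : Type*} [NormedAddCommGroup E] [NormedSpace ℝ E] {S : Set E} {x y : E}

theorem add_modulus_le_of_uniformConvexOn_of_isMinOn {φ : ℝ → ℝ} {J : E → ℝ}
    (hJ : UniformConvexOn S φ J) (hmin : IsMinOn J S x) (hx : x ∈ S) (hy : y ∈ S) :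
    J x + φ ‖x - y‖ ≤ J y := by
  have gap_on_segment : ∀ t ∈ Set.Ioo (0 : ℝ) 1, (1 - t) * φ ‖x - y‖ ≤ J y - J x := by
    intro t ⟨ht0, ht1⟩
    have hmin_t : J x ≤ J ((1 - t) • x + t • y) :=
      hmin (hJ.1 hx hy (sub_nonneg.2 ht1.le) ht0.le (sub_add_cancel 1 t))
    have hconv_t := hJ.2 hx hy (sub_nonneg.2 ht1.le) ht0.le (sub_add_cancel 1 t)
    simp only [smul_eq_mul] at hconv_t
    refine le_of_mul_le_mul_left ?_ ht0
    linarith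
  have hlim : Tendsto (fun t : ℝ ↦ (1 - t) * φ ‖x - y‖) (𝓝[>] 0) (𝓝 (φ ‖x - y‖)) := by
    have hcont : Continuous fun t : ℝ ↦ (1 - t) * φ ‖x - y‖ := by fun_prop
    simpa using (hcont.tendsto 0).mono_left nhdsWithin_le_nhds
  have hgap : φ ‖x - y‖ ≤ J y - J x :=
    le_of_tendsto hlim (eventually_of_mem (Ioo_mem_nhdsGT one_pos) gap_on_segment)
  linarith

theorem norm_sub_le_div_of_strongConvexOn_of_isMinOn {c K : ℝ} (hc : 0 < c) (hK : 0 ≤ K)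
    {J G : E → ℝ} (hJ : StrongConvexOn S c J) (hG : StrongConvexOn S c G)
    (hx : x ∈ S) (hy : y ∈ S) (hJx : IsMinOn J S x) (hGy : IsMinOn G S y)
    (hJG : (J y - G y) - (J x - G x) ≤ K * ‖x - y‖) :
    ‖x - y‖ ≤ K / c := by
  have growth_J := add_modulus_le_of_uniformConvexOn_of_isMinOn hJ hJx hx hy
  have growth_G := add_modulus_le_of_uniformConvexOn_of_isMinOn hG hGy hy hx
  rw [norm_sub_rev y x] at growth_G
  have hsq : ‖x - y‖ * c * ‖x - y‖ ≤ K * ‖x - y‖ := by linarith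
  rw [le_div_iff₀ hc]
  rcases (norm_nonneg (x - y)).eq_or_lt with hzero | hpos
  · simpa [← hzero] using hK
  · exact le_of_mul_le_mul_right hsq hpos

end StrongConvexity

section RegularizedRisk

variable {F ι : Type*} [NormedAddCommGroup F]

/-- The regularized empirical risk `w * ∑ p ∈ s, L p g + (lam / 2) * ‖g‖ ^ 2` of the losses `L`
over the finite index set `s`, minimized by the learner. The weight `w` does not depend on `s`, so
that removing a mini-sample does not rescale the others. -/
noncomputable def regularizedRisk (w lam : ℝ) (L : ι → F → ℝ) (s : Finset ι) (g : F) : ℝ :=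
  w * ∑ p ∈ s, L p g + lam / 2 * ‖g‖ ^ 2

theorem regularizedRisk_sub_erase [DecidableEq ι] (w lam : ℝ) (L : ι → F → ℝ) {s : Finset ι}
    {i : ι} (hi : i ∈ s) (g : F) :
    regularizedRisk w lam L s g - regularizedRisk w lam L (s.erase i) g = w * L i g := by
  simp only [regularizedRisk, ← Finset.add_sum_erase s (L · g) hi]
  ring

variable [InnerProductSpace ℝ F] {S : Set F} {w lam : ℝ} {L : ι → F → ℝ} {s : Finset ι}

theorem strongConvexOn_regularizedRisk (hw : 0 ≤ w) (hS : Convex ℝ S)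
    (hL : ∀ p ∈ s, ConvexOn ℝ S (L p)) : StrongConvexOn S lam (regularizedRisk w lam L s) := by
  rw [strongConvexOn_iff_convex]
  simpa [regularizedRisk] using (convexOn_finset_sum hS hL).smul hw

theorem norm_sub_le_of_isMinOn_regularizedRisk_erase [DecidableEq ι] {K : ℝ} (hw : 0 ≤ w)
    (hlam : 0 < lam) (hK : 0 ≤ K) (hL : ∀ p ∈ s, ConvexOn ℝ S (L p)) {i : ι} (hi : i ∈ s)
    {f f' : F} (hfS : f ∈ S) (hf'S : f' ∈ S) (hf : IsMinOn (regularizedRisk w lam L s) S f)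
    (hf' : IsMinOn (regularizedRisk w lam L (s.erase i)) S f')
    (hLi : |L i f - L i f'| ≤ K * ‖f - f'‖) :
    ‖f - f'‖ ≤ w * K / lam := by
  have hS : Convex ℝ S := (hL i hi).1
  refine norm_sub_le_div_of_strongConvexOn_of_isMinOn hlam (mul_nonneg hw hK)
    (strongConvexOn_regularizedRisk hw hS hL)
    (strongConvexOn_regularizedRisk hw hS fun p hp ↦ hL p (Finset.mem_of_mem_erase hp))
    hfS hf'S hf hf' ?_
  calc _ = w * (L i f' - L i f) := by
        rw [regularizedRisk_sub_erase w lam L hi, regularizedRisk_sub_erase w lam L hi, mul_sub]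
    _ ≤ w * (K * ‖f - f'‖) := by
        gcongr
        exact (abs_sub_le_iff.1 hLi).2
    _ = w * K * ‖f - f'‖ := (mul_assoc _ _ _).symm

end RegularizedRisk

section BoundedFeatures

theorem euclideanSpace_norm_le_sqrt_card_mul {𝕜 ι : Type*} [RCLike 𝕜] [Fintype ι] {v : ℝ}
    {x : EuclideanSpace 𝕜 ι} (hx : ∀ q, ‖x q‖ ≤ v) : ‖x‖ ≤ √(Fintype.card ι) * |v| := by
  rw [EuclideanSpace.norm_eq, ← Real.sqrt_sq_eq_abs, ← Real.sqrt_mul (Nat.cast_nonneg _)]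
  refine Real.sqrt_le_sqrt ?_
  calc ∑ q, ‖x q‖ ^ 2 ≤ ∑ _q : ι, v ^ 2 := by
        gcongr with q
        exact hx q
    _ = Fintype.card ι * v ^ 2 := by simp

theorem norm_sum_le_card_mul_sqrt_card_mul {𝕜 ι κ : Type*} [RCLike 𝕜] [Fintype ι] [Fintype κ]
    {v : ℝ} {x : κ → EuclideanSpace 𝕜 ι} (hx : ∀ k q, ‖x k q‖ ≤ v) :
    ‖∑ k, x k‖ ≤ Fintype.card κ * (√(Fintype.card ι) * |v|) := by
  simpa using norm_sum_le_of_le Finset.univ fun k _ ↦ euclideanSpace_norm_le_sqrt_card_mul (hx k)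

end BoundedFeatures

section StructuredLoss

variable {F X : Type*} [SeminormedAddCommGroup F] [SeminormedAddCommGroup X]

/-- Admissibility of an evaluation with constant `ρ`: the prediction at every position of a
sequence `x` is Lipschitz in the function, with constant `ρ * ‖∑ k, x k‖`. Inputs of every
structure complexity `t` are covered by the same `ρ`. -/
def IsAdmissible (ρ : ℝ) (eval : F → (t : ℕ) → (Fin t → X) → Fin t → ℝ) : Prop :=
  ∀ (g g' : F) (t : ℕ) (x : Fin t → X) (k : Fin t),
    |eval g t x k - eval g' t x k| ≤ ρ * ‖g - g'‖ * ‖∑ k', x k'‖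

/-- Smoothness of a point-wise cost in the sense of structure regularization: `c` is `τ`-Lipschitz
in the prediction, uniformly in the true tag. -/
def IsSmoothCost (τ : ℝ) (c : ℝ → ℝ → ℝ) : Prop :=
  ∀ y₁ y₂ ystar : ℝ, |c y₁ ystar - c y₂ ystar| ≤ τ * |y₁ - y₂|

/-- The sample-wise loss of `g` on the sample `(x, y)` of structure complexity `t`: the sum of the
point-wise costs over the positions. The function `g` comes last, so that convexity in `g` is
convexity of the partial application. -/
def sampleLoss {F X : Type*} (c : ℝ → ℝ → ℝ) (eval : F → (t : ℕ) → (Fin t → X) → Fin t → ℝ)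
    {t : ℕ} (x : Fin t → X) (y : Fin t → ℝ) (g : F) : ℝ :=
  ∑ k, c (eval g t x k) (y k)

variable {ρ τ : ℝ} {c : ℝ → ℝ → ℝ} {eval : F → (t : ℕ) → (Fin t → X) → Fin t → ℝ}

theorem IsSmoothCost.nonneg (hc : IsSmoothCost τ c) : 0 ≤ τ := by
  simpa using (abs_nonneg _).trans (hc 1 0 0)

theorem abs_sampleLoss_sub_le (heval : IsAdmissible ρ eval) (hc : IsSmoothCost τ c) {t : ℕ}
    (x : Fin t → X) (y : Fin t → ℝ) (g g' : F) :
    |sampleLoss c eval x y g - sampleLoss c eval x y g'|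
      ≤ t * (τ * (ρ * ‖g - g'‖ * ‖∑ k, x k‖)) := by
  have pointwise (k : Fin t) : |c (eval g t x k) (y k) - c (eval g' t x k) (y k)|
      ≤ τ * (ρ * ‖g - g'‖ * ‖∑ k', x k'‖) :=
    (hc _ _ _).trans (mul_le_mul_of_nonneg_left (heval g g' t x k) hc.nonneg)
  simp only [sampleLoss, ← Finset.sum_sub_distrib]
  calc _ ≤ ∑ k, |c (eval g t x k) (y k) - c (eval g' t x k) (y k)| :=
        Finset.abs_sum_le_sum_abs _ _
    _ ≤ ∑ _k : Fin t, τ * (ρ * ‖g - g'‖ * ‖∑ k', x k'‖) := Finset.sum_le_sum fun k _ ↦ pointwise k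
    _ = t * (τ * (ρ * ‖g - g'‖ * ‖∑ k, x k‖)) := by simp

end StructuredLoss

section Stability

variable {F ι : Type*} [NormedAddCommGroup F] [InnerProductSpace ℝ F] [DecidableEq ι] {d : ℕ}
  {eval : F → (t : ℕ) → (Fin t → EuclideanSpace ℝ (Fin d)) → Fin t → ℝ} {c : ℝ → ℝ → ℝ}
  {ρ τ v w lam : ℝ} {S : Set F} {s : Finset ι} {N : ι → ℕ}
  {x' : ∀ p, Fin (N p) → EuclideanSpace ℝ (Fin d)} {y' : ∀ p, Fin (N p) → ℝ} {i : ι} {f f' : F}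

theorem norm_sub_le_of_isMinOn_regularizedRisk_sampleLoss (hρ : 0 ≤ ρ)
    (heval : IsAdmissible ρ eval) (hc : IsSmoothCost τ c) (hw : 0 ≤ w) (hlam : 0 < lam)
    (hconv : ∀ p ∈ s, ConvexOn ℝ S (sampleLoss c eval (x' p) (y' p)))
    (hi : i ∈ s) (hval : ∀ k q, |x' i k q| ≤ v) (hfS : f ∈ S) (hf'S : f' ∈ S)
    (hf : IsMinOn (regularizedRisk w lam (fun p ↦ sampleLoss c eval (x' p) (y' p)) s) S f)
    (hf' : IsMinOn
      (regularizedRisk w lam (fun p ↦ sampleLoss c eval (x' p) (y' p)) (s.erase i)) S f') :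
    ‖f - f'‖ ≤ w * (τ * ρ * (N i) ^ 2 * (√d * |v|)) / lam := by
  have hτ : 0 ≤ τ := hc.nonneg
  have feature_bound : ‖∑ k, x' i k‖ ≤ N i * (√d * |v|) := by
    simpa using norm_sum_le_card_mul_sqrt_card_mul (𝕜 := ℝ) hval
  refine norm_sub_le_of_isMinOn_regularizedRisk_erase hw hlam (by positivity) hconv hi
    hfS hf'S hf hf' ?_
  calc _ ≤ N i * (τ * (ρ * ‖f - f'‖ * ‖∑ k, x' i k‖)) :=
        abs_sampleLoss_sub_le heval hc (x' i) (y' i) f f'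
    _ ≤ N i * (τ * (ρ * ‖f - f'‖ * (N i * (√d * |v|)))) := by gcongr
    _ = τ * ρ * (N i) ^ 2 * (√d * |v|) * ‖f - f'‖ := by ring

theorem function_stability_structure_regularization_general (hρ : 0 ≤ ρ)
    (heval : IsAdmissible ρ eval) (hc : IsSmoothCost τ c) (hw : 0 ≤ w) (hlam : 0 < lam)
    (hconv : ∀ p ∈ s, ConvexOn ℝ S (sampleLoss c eval (x' p) (y' p)))
    (hi : i ∈ s) (hval : ∀ k q, |x' i k q| ≤ v) (hfS : f ∈ S) (hf'S : f' ∈ S)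
    (hf : IsMinOn (regularizedRisk w lam (fun p ↦ sampleLoss c eval (x' p) (y' p)) s) S f)
    (hf' : IsMinOn
      (regularizedRisk w lam (fun p ↦ sampleLoss c eval (x' p) (y' p)) (s.erase i)) S f')
    {t : ℕ} (x : Fin t → EuclideanSpace ℝ (Fin d)) (hx : ∀ k q, |x k q| ≤ v) (k : Fin t) :
    |eval f t x k - eval f' t x k| ≤ w * (d * τ * ρ ^ 2 * v ^ 2 * (N i) ^ 2 * t) / lam := by
  have hτ : 0 ≤ τ := hc.nonneg
  have hff' : ‖f - f'‖ ≤ w * (τ * ρ * (N i) ^ 2 * (√d * |v|)) / lam :=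
    norm_sub_le_of_isMinOn_regularizedRisk_sampleLoss hρ heval hc hw hlam hconv hi hval
      hfS hf'S hf hf'
  have feature_bound : ‖∑ k, x k‖ ≤ t * (√d * |v|) := by
    simpa using norm_sum_le_card_mul_sqrt_card_mul (𝕜 := ℝ) hx
  calc _ ≤ ρ * ‖f - f'‖ * ‖∑ k, x k‖ := heval f f' t x k
    _ ≤ ρ * (w * (τ * ρ * (N i) ^ 2 * (√d * |v|)) / lam) * (t * (√d * |v|)) := by
        gcongr
    _ = w * (√d ^ 2 * τ * ρ ^ 2 * |v| ^ 2 * (N i) ^ 2 * t) / lam := by ring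
    _ = w * (d * τ * ρ ^ 2 * v ^ 2 * (N i) ^ 2 * t) / lam := by
        rw [Real.sq_sqrt (Nat.cast_nonneg d), sq_abs]

end Stability

/-- **Theorem 2 (Stability vs. structure regularization).**
Under the structure regularization framework, with convex differentiable
sample-wise losses, a `ρ`-admissible evaluation, a `τ`-smooth point-wise cost,
and all feature values bounded by `v`, the function stability of the minimizer
`f` compared with the minimizer `fminus` obtained by removing a single
mini-sample term `i'` is bounded:  for every sample `(x, y)` of structure
complexity `n` with feature values bounded by `v` and every position `k`,
`|f(x,k) - fminus(x,k)| ≤ d * τ * ρ² * v² * n² / (m * lam * α²)`. -/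
theorem function_stability_structure_regularization
    {F : Type*} [NormedAddCommGroup F] [InnerProductSpace ℝ F]
    (d m α n n' : ℕ) (hm : 0 < m) (hα : 0 < α) (hn : 0 < n)
    (hdiv : n = α * n')
    (eval : F → (t : ℕ) → (Fin t → EuclideanSpace ℝ (Fin d)) → Fin t → ℝ)
    (ρ : ℝ) (hρ : 0 ≤ ρ)
    (hadm : ∀ (g g' : F) (t : ℕ) (x : Fin t → EuclideanSpace ℝ (Fin d)) (k : Fin t),
      |eval g t x k - eval g' t x k| ≤ ρ * ‖g - g'‖ * ‖∑ k', x k'‖)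
    (cτ : ℝ → ℝ → ℝ) (τ : ℝ)
    (hsmooth : ∀ y₁ y₂ ystar : ℝ, |cτ y₁ ystar - cτ y₂ ystar| ≤ τ * |y₁ - y₂|)
    (hcost_convex : ∀ ystar : ℝ, ConvexOn ℝ Set.univ (fun y : ℝ => cτ y ystar))
    (v : ℝ)
    (x' : Fin m × Fin α → Fin n' → EuclideanSpace ℝ (Fin d))
    (y' : Fin m × Fin α → Fin n' → ℝ)
    (hval : ∀ (p : Fin m × Fin α) (k : Fin n') (q : Fin d), |x' p k q| ≤ v)
    (hconv : ∀ p : Fin m × Fin α,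
      ConvexOn ℝ Set.univ (fun g : F => ∑ k, cτ (eval g n' (x' p) k) (y' p k)))
    (hdiff : ∀ p : Fin m × Fin α,
      Differentiable ℝ (fun g : F => ∑ k, cτ (eval g n' (x' p) k) (y' p k)))
    (lam : ℝ) (hlam : 0 < lam)
    (f : F)
    (hf : ∀ g : F,
      1 / ((m : ℝ) * n) * ∑ p : Fin m × Fin α, ∑ k, cτ (eval f n' (x' p) k) (y' p k)
          + lam / 2 * ‖f‖ ^ 2
        ≤ 1 / ((m : ℝ) * n) * ∑ p : Fin m × Fin α, ∑ k, cτ (eval g n' (x' p) k) (y' p k)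
          + lam / 2 * ‖g‖ ^ 2)
    (i' : Fin m × Fin α) (fminus : F)
    (hfminus : ∀ g : F,
      1 / ((m : ℝ) * n) * ∑ p ∈ Finset.univ.erase i', ∑ k, cτ (eval fminus n' (x' p) k) (y' p k)
          + lam / 2 * ‖fminus‖ ^ 2
        ≤ 1 / ((m : ℝ) * n) * ∑ p ∈ Finset.univ.erase i', ∑ k, cτ (eval g n' (x' p) k) (y' p k)
          + lam / 2 * ‖g‖ ^ 2) :
    ∀ (x : Fin n → EuclideanSpace ℝ (Fin d)),
      (∀ (k : Fin n) (q : Fin d), |x k q| ≤ v) →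
      ∀ k : Fin n,
        |eval f n x k - eval fminus n x k|
          ≤ (d : ℝ) * τ * ρ ^ 2 * v ^ 2 * (n : ℝ) ^ 2 / ((m : ℝ) * lam * (α : ℝ) ^ 2) := by
  intro x hx k
  refine (function_stability_structure_regularization_general hρ hadm hsmooth (by positivity) hlam
    (fun p _ ↦ hconv p) (Finset.mem_univ i') (hval i') (Set.mem_univ f) (Set.mem_univ fminus)
    (fun g _ ↦ hf g) (fun g _ ↦ hfminus g) x hx k).trans_eq ?_
  have mini_length : (n' : ℝ) = n / α := by simp [hdiv, hα.ne']
  rw [mini_length]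
  field_simp
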